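/- arXiv:1712.06078 — 3 statements merged into one kernel-verified Lean document; each statement's English description precedes it below -/
import Mathlib

section
/- Let d ≥ 1 and let P ⊂ ℝ^d be a d-dimensional lattice polytope which is the convex hull of a subset of the set S = {0} ∪ {e_i : 1 ≤ i ≤ d} ∪ {e_i + e_j : 1 ≤ i ≤ j ≤ d}. Then the origin of ℝ^{d+1} belongs to the interior of Ω(P) = Ω(P,P), and Ω(P) is a reflexive polytope. -/
/-- The set `S = {0} ∪ {e_i} ∪ {e_i + e_j : i ≤ j}` of `(0,1,2)`-vectors. -/
def stdSet (d : ℕ) : Set (Fin d → ℝ) :=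
  {0} ∪ {x | ∃ i : Fin d, x = Pi.single i 1} ∪
    {x | ∃ i j : Fin d, i ≤ j ∧ x = Pi.single i 1 + Pi.single j 1}

/-- `Ω(P,Q) = conv((P × {1}) ∪ ((−Q) × {−1})) ⊆ ℝ^{d+1}`. -/
def Omega {d : ℕ} (P Q : Set (Fin d → ℝ)) : Set (Fin (d + 1) → ℝ) :=
  convexHull ℝ
    ((fun p => Fin.snoc p (1 : ℝ)) '' P ∪ (fun q => Fin.snoc (-q) (-1 : ℝ)) '' Q)

/-- A point of `ℝ^m` is a lattice point if all of its coordinates are integers. -/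
def IsLatticePt {m : ℕ} (x : Fin m → ℝ) : Prop := ∀ i, ∃ z : ℤ, x i = (z : ℝ)

/-- The dual polytope `R^∨ = {y : ⟨x,y⟩ ≤ 1 for all x ∈ R}`. -/
def dualPolytope {m : ℕ} (R : Set (Fin m → ℝ)) : Set (Fin m → ℝ) :=
  {y | ∀ x ∈ R, ∑ i, x i * y i ≤ 1}

/-- A full-dimensional lattice polytope `R ⊆ ℝ^m` is reflexive if the origin is in
its interior and all vertices (extreme points) of the dual polytope are lattice points. -/
def IsReflexive {m : ℕ} (R : Set (Fin m → ℝ)) : Prop :=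
  (0 : Fin m → ℝ) ∈ interior R ∧
    ∀ y ∈ Set.extremePoints ℝ (dualPolytope R), IsLatticePt y

/-!
A point of `S` is a sum `v_i + v_j` of two vertices of the standard simplex
`conv {0, e_1, …, e_d}`. In the coordinates `u_i = ⟨(v_i, 1/2), y⟩` on `ℝ^{d+1}`, the inequalities
`±⟨(v_i + v_j, 1), y⟩ ≤ 1` cutting out the dual of `Ω(P,Q)` read `±(u_i + u_j) ≤ 1`. If such an
inequality has slack `s`, then `|cos (π u_i) + cos (π u_j)| ≤ π s`, because the cosine is
1-Lipschitz and the left-hand side vanishes when `s = 0`. Hence moving `u` by `1 / π` times the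
vector `(cos (π u_i))_i`, in either direction, stays inside the dual, so at a vertex all
`cos (π u_i)` vanish. There every `u_i` is half an odd integer, which makes `y` a lattice point.

If `p` is interior to both `P` and `Q`, then `0` is the midpoint of `(p, 1)` and `(-p, -1)`, and
moving these two endpoints within `P × {1}` and `(-Q) × {-1}` reaches every point near `0`.
-/

section Perturbation

open Real Pointwise

theorem eq_zero_of_mem_extremePoints {E : Type*} [AddCommGroup E] [Module ℝ E] {A : Set E}
    {x v : E} (hx : x ∈ A.extremePoints ℝ) (hadd : x + v ∈ A) (hsub : x - v ∈ A) : v = 0 := by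
  have hmid : x ∈ openSegment ℝ (x + v) (x - v) :=
    ⟨1 / 2, 1 / 2, by norm_num, by norm_num, by norm_num, by module⟩
  exact add_eq_left.1 (hx.2 hadd hsub hmid)

theorem abs_cos_pi_mul_add_cos_pi_mul_le (x y : ℝ) :
    |cos (π * x) + cos (π * y)| ≤ π * |1 - (x + y)| :=
  calc |cos (π * x) + cos (π * y)|
      = |cos (π * x) - cos (π - π * y)| := by rw [cos_pi_sub, sub_neg_eq_add]
    _ ≤ |π * x - (π - π * y)| := abs_cos_sub_cos_le _ _
    _ = |π * -(1 - (x + y))| := by ring_nf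
    _ = π * |1 - (x + y)| := by rw [abs_mul, abs_neg, abs_of_pos pi_pos]

theorem exists_int_add_half_of_cos_pi_mul_eq_zero {x : ℝ} (hx : cos (π * x) = 0) :
    ∃ k : ℤ, x = k + 1 / 2 := by
  obtain ⟨k, hk⟩ := cos_eq_zero_iff.1 hx
  exact ⟨k, mul_left_cancel₀ pi_ne_zero (by rw [hk]; ring)⟩

variable {ι : Type*} {E F : Set (ι × ι)} {u : ι → ℝ}

/-- The polyhedron `{u : u_i + u_j ≤ 1 for all (i, j) ∈ E}` of a graph with edge set `E`, where
edges are ordered pairs and loops are allowed. -/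
def edgePolyhedron (E : Set (ι × ι)) : Set (ι → ℝ) :=
  {u | ∀ e ∈ E, u e.1 + u e.2 ≤ 1}

theorem add_smul_cos_mem_edgePolyhedron {c : ℝ} (hc : |c| * π ≤ 1) (hu : u ∈ edgePolyhedron E) :
    u + c • (fun i => cos (π * u i)) ∈ edgePolyhedron E := by
  intro e he
  have hslack : 0 ≤ 1 - (u e.1 + u e.2) := sub_nonneg.2 (hu e he)
  have hmove : c * (cos (π * u e.1) + cos (π * u e.2)) ≤ 1 - (u e.1 + u e.2) :=
    calc c * (cos (π * u e.1) + cos (π * u e.2))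
        ≤ |c| * |cos (π * u e.1) + cos (π * u e.2)| := (le_abs_self _).trans_eq (abs_mul _ _)
      _ ≤ |c| * (π * |1 - (u e.1 + u e.2)|) := by
          gcongr; exact abs_cos_pi_mul_add_cos_pi_mul_le _ _
      _ = |c| * π * (1 - (u e.1 + u e.2)) := by rw [abs_of_nonneg hslack, mul_assoc]
      _ ≤ 1 - (u e.1 + u e.2) := mul_le_of_le_one_left hslack hc
  simp only [Pi.add_apply, Pi.smul_apply, smul_eq_mul]
  linarith

theorem add_smul_cos_mem_edgePolyhedron_inter_neg {c : ℝ} (hc : |c| * π ≤ 1)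
    (hu : u ∈ edgePolyhedron E ∩ -edgePolyhedron F) :
    u + c • (fun i => cos (π * u i)) ∈ edgePolyhedron E ∩ -edgePolyhedron F := by
  refine ⟨add_smul_cos_mem_edgePolyhedron hc hu.1, ?_⟩
  have hneg := add_smul_cos_mem_edgePolyhedron (c := -c) (by rwa [abs_neg]) hu.2
  simpa only [Set.mem_neg, neg_add, neg_smul, Pi.neg_apply, mul_neg, cos_neg] using hneg

theorem exists_int_add_half_of_mem_extremePoints_edgePolyhedron
    (hu : u ∈ (edgePolyhedron E ∩ -edgePolyhedron F).extremePoints ℝ) (i : ι) :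
    ∃ k : ℤ, u i = k + 1 / 2 := by
  have hpi : |π⁻¹| * π ≤ 1 := by rw [abs_of_pos (by positivity), inv_mul_cancel₀ pi_ne_zero]
  have hzero : π⁻¹ • (fun i => cos (π * u i)) = 0 :=
    eq_zero_of_mem_extremePoints hu (add_smul_cos_mem_edgePolyhedron_inter_neg hpi hu.1) <| by
      rw [sub_eq_add_neg, ← neg_smul]
      exact add_smul_cos_mem_edgePolyhedron_inter_neg (by rwa [abs_neg]) hu.1
  have hcos := (smul_eq_zero.1 hzero).resolve_left (inv_ne_zero pi_ne_zero)
  exact exists_int_add_half_of_cos_pi_mul_eq_zero (congrFun hcos i)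

end Perturbation

section Duality

open Matrix Pointwise

theorem mem_dualPolytope_iff {m : ℕ} {R : Set (Fin m → ℝ)} {y : Fin m → ℝ} :
    y ∈ dualPolytope R ↔ ∀ x ∈ R, x ⬝ᵥ y ≤ 1 :=
  Iff.rfl

theorem forall_mem_convexHull_dotProduct_le_iff {m : Type*} [Fintype m] {s : Set (m → ℝ)}
    {y : m → ℝ} {c : ℝ} : (∀ x ∈ convexHull ℝ s, x ⬝ᵥ y ≤ c) ↔ ∀ x ∈ s, x ⬝ᵥ y ≤ c := by
  have hlin : IsLinearMap ℝ fun x : m → ℝ => x ⬝ᵥ y :=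
    ⟨fun x x' => add_dotProduct x x' y, fun a x => smul_dotProduct a x y⟩
  exact (convex_halfSpace_le hlin c).convexHull_subset_iff

variable {d : ℕ}

theorem snoc_dotProduct {R : Type*} [NonUnitalNonAssocSemiring R] (p : Fin d → R) (t : R)
    (y : Fin (d + 1) → R) :
    (Fin.snoc p t : Fin (d + 1) → R) ⬝ᵥ y = p ⬝ᵥ Fin.init y + t * y (Fin.last d) := by
  simp [dotProduct, Fin.sum_univ_castSucc, Fin.init]

/-- The copy `P × {1}` of `P` in `ℝ^{d+1}`. -/
def heightOne (P : Set (Fin d → ℝ)) : Set (Fin (d + 1) → ℝ) :=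
  (fun p => Fin.snoc p 1) '' P

theorem mem_dualPolytope_heightOne_iff {P : Set (Fin d → ℝ)} {y : Fin (d + 1) → ℝ} :
    y ∈ dualPolytope (heightOne P) ↔ ∀ p ∈ P, p ⬝ᵥ Fin.init y ≤ 1 - y (Fin.last d) := by
  simp only [heightOne, mem_dualPolytope_iff, Set.forall_mem_image, snoc_dotProduct, one_mul,
    le_sub_iff_add_le]

theorem dualPolytope_heightOne_convexHull (F : Set (Fin d → ℝ)) :
    dualPolytope (heightOne (convexHull ℝ F)) = dualPolytope (heightOne F) := by
  ext y
  simp only [mem_dualPolytope_heightOne_iff, forall_mem_convexHull_dotProduct_le_iff]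

theorem dualPolytope_omega (P Q : Set (Fin d → ℝ)) :
    dualPolytope (Omega P Q) = dualPolytope (heightOne P) ∩ -dualPolytope (heightOne Q) := by
  ext y
  have hneg (q : Fin d → ℝ) : (Fin.snoc (-q) (-1) : Fin (d + 1) → ℝ) ⬝ᵥ y =
      (Fin.snoc q 1 : Fin (d + 1) → ℝ) ⬝ᵥ -y := by
    rw [snoc_dotProduct, dotProduct_neg, snoc_dotProduct, neg_dotProduct]
    ring
  simp only [Omega, heightOne, mem_dualPolytope_iff, forall_mem_convexHull_dotProduct_le_iff,
    Set.mem_union, or_imp, forall_and, Set.forall_mem_image, hneg, Set.mem_inter_iff, Set.mem_neg]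

end Duality

section HalfCoordinates

open Matrix Pointwise

/-- The vertices `e_1, …, e_d, 0` of the standard simplex in `ℝ^d`, the origin being last. -/
def simplexVertex (d : ℕ) : Fin (d + 1) → Fin d → ℝ :=
  Fin.snoc (fun i => Pi.single i 1) 0

/-- The coordinates `u_i = ⟨(v_i, 1/2), y⟩` on `ℝ^{d+1}`, where the `v_i` are the vertices of the
standard simplex; they turn `⟨(v_i + v_j, 1), y⟩` into `u_i + u_j`. -/
noncomputable def halfCoords (d : ℕ) : (Fin (d + 1) → ℝ) ≃ₗ[ℝ] (Fin (d + 1) → ℝ) where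
  toFun y i := simplexVertex d i ⬝ᵥ Fin.init y + y (Fin.last d) / 2
  invFun u := Fin.snoc (fun i => u i.castSucc - u (Fin.last d)) (2 * u (Fin.last d))
  map_add' y z := by
    ext i
    have hinit : Fin.init (y + z) = Fin.init y + Fin.init z := rfl
    simp only [hinit, dotProduct_add, Pi.add_apply]
    ring
  map_smul' c y := by
    ext i
    have hinit : Fin.init (c • y) = c • Fin.init y := rfl
    simp only [hinit, dotProduct_smul, Pi.smul_apply, smul_eq_mul, RingHom.id_apply]
    ring
  left_inv y := by
    ext i
    cases i using Fin.lastCases <;> simp [simplexVertex, Fin.init, mul_div_cancel₀]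
  right_inv u := by
    ext i
    cases i using Fin.lastCases <;> simp [simplexVertex]

variable {d : ℕ}

theorem exists_simplexVertex_add_eq_of_mem_stdSet {a : Fin d → ℝ} (ha : a ∈ stdSet d) :
    ∃ i j, simplexVertex d i + simplexVertex d j = a := by
  rcases ha with (rfl | ⟨i, rfl⟩) | ⟨i, j, -, rfl⟩
  · exact ⟨Fin.last d, Fin.last d, by simp [simplexVertex]⟩
  · exact ⟨i.castSucc, Fin.last d, by simp [simplexVertex]⟩
  · exact ⟨i.castSucc, j.castSucc, by simp [simplexVertex]⟩

theorem halfCoords_add_halfCoords (y : Fin (d + 1) → ℝ) (i j : Fin (d + 1)) :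
    halfCoords d y i + halfCoords d y j =
      (simplexVertex d i + simplexVertex d j) ⬝ᵥ Fin.init y + y (Fin.last d) := by
  simp only [halfCoords, LinearEquiv.coe_mk, LinearMap.coe_mk, AddHom.coe_mk, add_dotProduct]
  ring

/-- The graph on the vertices of the standard simplex whose edges are the pairs with sum in `F`. -/
def simplexEdges (F : Set (Fin d → ℝ)) : Set (Fin (d + 1) × Fin (d + 1)) :=
  {e | simplexVertex d e.1 + simplexVertex d e.2 ∈ F}

theorem dualPolytope_heightOne_eq_preimage_edgePolyhedron {F : Set (Fin d → ℝ)}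
    (hF : F ⊆ stdSet d) :
    dualPolytope (heightOne F) = halfCoords d ⁻¹' edgePolyhedron (simplexEdges F) := by
  ext y
  have hedge (e : Fin (d + 1) × Fin (d + 1)) : halfCoords d y e.1 + halfCoords d y e.2 ≤ 1 ↔
      (simplexVertex d e.1 + simplexVertex d e.2) ⬝ᵥ Fin.init y ≤ 1 - y (Fin.last d) := by
    rw [halfCoords_add_halfCoords, le_sub_iff_add_le]
  rw [mem_dualPolytope_heightOne_iff]
  refine ⟨fun h e he => (hedge e).2 (h _ he), fun h a ha => ?_⟩
  obtain ⟨i, j, rfl⟩ := exists_simplexVertex_add_eq_of_mem_stdSet (hF ha)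
  exact (hedge (i, j)).1 (h (i, j) ha)

theorem dualPolytope_omega_convexHull_eq_preimage_edgePolyhedron {FP FQ : Set (Fin d → ℝ)}
    (hFP : FP ⊆ stdSet d) (hFQ : FQ ⊆ stdSet d) :
    dualPolytope (Omega (convexHull ℝ FP) (convexHull ℝ FQ)) =
      halfCoords d ⁻¹' (edgePolyhedron (simplexEdges FP) ∩ -edgePolyhedron (simplexEdges FQ)) := by
  rw [dualPolytope_omega, dualPolytope_heightOne_convexHull, dualPolytope_heightOne_convexHull,
    dualPolytope_heightOne_eq_preimage_edgePolyhedron hFP,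
    dualPolytope_heightOne_eq_preimage_edgePolyhedron hFQ]
  ext y
  simp only [Set.mem_inter_iff, Set.mem_neg, Set.mem_preimage, map_neg]

theorem isLatticePt_of_halfCoords_eq_int_add_half {y : Fin (d + 1) → ℝ}
    (hy : ∀ i, ∃ k : ℤ, halfCoords d y i = k + 1 / 2) : IsLatticePt y := by
  choose k hk using hy
  have hsymm : y = (halfCoords d).symm fun i => k i + 1 / 2 :=
    (halfCoords d).eq_symm_apply.2 (funext hk)
  intro i
  cases i using Fin.lastCases with
  | last =>
    refine ⟨2 * k (Fin.last d) + 1, ?_⟩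
    simp [hsymm, halfCoords, mul_add]
  | cast i =>
    refine ⟨k i.castSucc - k (Fin.last d), ?_⟩
    simp [hsymm, halfCoords]

theorem isLatticePt_of_mem_extremePoints_dualPolytope_omega {FP FQ : Set (Fin d → ℝ)}
    (hFP : FP ⊆ stdSet d) (hFQ : FQ ⊆ stdSet d) {y : Fin (d + 1) → ℝ}
    (hy : y ∈ (dualPolytope (Omega (convexHull ℝ FP) (convexHull ℝ FQ))).extremePoints ℝ) :
    IsLatticePt y := by
  have hu := Set.mem_image_of_mem (halfCoords d) hy
  rw [image_extremePoints, dualPolytope_omega_convexHull_eq_preimage_edgePolyhedron hFP hFQ,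
    Set.image_preimage_eq _ (halfCoords d).surjective] at hu
  exact isLatticePt_of_halfCoords_eq_int_add_half
    (exists_int_add_half_of_mem_extremePoints_edgePolyhedron hu)

end HalfCoordinates

section Interior

variable {d : ℕ} {P Q : Set (Fin d → ℝ)}

theorem mem_omega_of_mem {p : Fin d → ℝ} {z : Fin (d + 1) → ℝ} (hz : |z (Fin.last d)| ≤ 1)
    (hadd : p + (Fin.init z - z (Fin.last d) • p) ∈ P)
    (hsub : p - (Fin.init z - z (Fin.last d) • p) ∈ Q) : z ∈ Omega P Q := by
  obtain ⟨hneg, hpos⟩ := abs_le.1 hz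
  set t := z (Fin.last d) with ht
  set w := Fin.init z - t • p with hw
  have htop : Fin.snoc (p + w) 1 ∈ Omega P Q := subset_convexHull ℝ _ (Or.inl ⟨_, hadd, rfl⟩)
  have hbot : Fin.snoc (-(p - w)) (-1) ∈ Omega P Q :=
    subset_convexHull ℝ _ (Or.inr ⟨_, hsub, rfl⟩)
  have hcomb : z =
      ((1 + t) / 2) • Fin.snoc (p + w) 1 + ((1 - t) / 2) • Fin.snoc (-(p - w)) (-1) := by
    ext i
    cases i using Fin.lastCases <;>
      simp only [hw, ht, Fin.init, Fin.snoc_last, Fin.snoc_castSucc, Pi.add_apply, Pi.sub_apply,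
        Pi.neg_apply, Pi.smul_apply, smul_eq_mul] <;>
      ring
  rw [hcomb]
  exact convex_convexHull ℝ _ htop hbot (by linarith) (by linarith) (by ring)

theorem zero_mem_interior_omega (h : (interior P ∩ interior Q).Nonempty) :
    0 ∈ interior (Omega P Q) := by
  obtain ⟨p, hpP, hpQ⟩ := h
  let w (z : Fin (d + 1) → ℝ) : Fin d → ℝ := Fin.init z - z (Fin.last d) • p
  have hw : Continuous w := by unfold w Fin.init; fun_prop
  have hw0 : w 0 = 0 := by ext; simp [w, Fin.init]
  rw [mem_interior_iff_mem_nhds] at hpP hpQ ⊢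
  have hadd : ∀ᶠ z in nhds 0, p + w z ∈ P :=
    (continuous_const.add hw).continuousAt.eventually_mem (by simpa [hw0] using hpP)
  have hsub : ∀ᶠ z in nhds 0, p - w z ∈ Q :=
    (continuous_const.sub hw).continuousAt.eventually_mem (by simpa [hw0] using hpQ)
  have hlast : ∀ᶠ z : Fin (d + 1) → ℝ in nhds 0, |z (Fin.last d)| < 1 :=
    (continuous_apply (Fin.last d)).abs.continuousAt.eventually_lt_const (by simp)
  filter_upwards [hadd, hsub, hlast] with z hP hQ hz
  exact mem_omega_of_mem hz.le hP hQ

theorem interior_nonempty_of_finrank_direction_affineSpan_eq {E : Type*} [NormedAddCommGroup E]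
    [NormedSpace ℝ E] [FiniteDimensional ℝ E] [Nontrivial E] {s : Set E} (hs : Convex ℝ s)
    (hdim : Module.finrank ℝ (affineSpan ℝ s).direction = Module.finrank ℝ E) :
    (interior s).Nonempty := by
  have hdir : (affineSpan ℝ s).direction = ⊤ := Submodule.eq_top_of_finrank_eq hdim
  have hne : s.Nonempty := by
    rw [Set.nonempty_iff_ne_empty]
    rintro rfl
    rw [AffineSubspace.span_empty, AffineSubspace.direction_bot] at hdir
    exact bot_ne_top hdir
  rw [hs.interior_nonempty_iff_affineSpan_eq_top]
  exact (AffineSubspace.direction_eq_top_iff_of_nonempty ((affineSpan_nonempty ℝ).2 hne)).1 hdir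

end Interior

theorem stmt1_general {d : ℕ} {FP FQ : Set (Fin d → ℝ)} (hFP : FP ⊆ stdSet d)
    (hFQ : FQ ⊆ stdSet d)
    (hinterior : (interior (convexHull ℝ FP) ∩ interior (convexHull ℝ FQ)).Nonempty) :
    IsReflexive (Omega (convexHull ℝ FP) (convexHull ℝ FQ)) :=
  ⟨zero_mem_interior_omega hinterior,
    fun _ hy => isLatticePt_of_mem_extremePoints_dualPolytope_omega hFP hFQ hy⟩

theorem stmt1 (d : ℕ) (hd : 1 ≤ d) (P : Set (Fin d → ℝ))
    (FP : Set (Fin d → ℝ)) (hFP : FP ⊆ stdSet d)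
    (hP : P = convexHull ℝ FP)
    (hPdim : Module.finrank ℝ (affineSpan ℝ P).direction = d) :
    (0 : Fin (d + 1) → ℝ) ∈ interior (Omega P P) ∧ IsReflexive (Omega P P) := by
  subst hP
  have : NeZero d := ⟨by omega⟩
  have hinterior := interior_nonempty_of_finrank_direction_affineSpan_eq (convex_convexHull ℝ FP)
    (hPdim.trans (Module.finrank_fin_fun ℝ).symm)
  have hrefl := stmt1_general hFP hFP (by rwa [Set.inter_self])
  exact ⟨hrefl.1, hrefl⟩
end

section
/- Let A = (a_{ij}) ∈ ℤ^{d×d} be a matrix with all entries in {0,1,2} such that every row satisfies a_{id} = 1 and a_{i1} + ⋯ + a_{i,d−1} ≤ 2. If det(A) ≠ 0, then there exist matrices U, V ∈ ℤ^{d×d} with det(U) = ±1 and det(V) = ±1 and an integer 0 ≤ s ≤ d such that U A V is the diagonal matrix whose first s diagonal entries equal 1 and whose remaining d − s diagonal entries equal 2. -/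
/-!
Replacing the column of ones of `A` by the slacks `2 - ∑ a_ij` is right multiplication by a matrix
of determinant `2`, and turns `A` into a matrix `B` all of whose rows have the form `e_a + e_b`:
the unsigned incidence matrix of a multigraph with loops. In the cokernel of the row lattice of `B`
every edge `ab` gives `e_a = -e_b`. If `e_i ≠ -e_i` held there, the vector that is `1` at the `j`
with `e_j = e_i`, `-1` at those with `e_j = -e_i` and `0` elsewhere would be a nonzero kernel vector
of `B` (the `±1` colouring of a bipartite component). As `det B ≠ 0`, the row lattice therefore
contains every `2 e_i`, so `2 I` is a left multiple of `B` and hence of `A`. This forces all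
invariant factors of `A` to divide the prime `2`.
-/

open Matrix

section Equivalence

variable {n R : Type*} [Fintype n] [DecidableEq n] [CommRing R]

/-- Equivalence of square matrices under invertible row and column operations over `R`. Over `ℤ`,
a determinant is a unit exactly when it is `±1`. -/
def UnimodularEquiv (A B : Matrix n n R) : Prop :=
  ∃ U V : Matrix n n R, IsUnit U.det ∧ IsUnit V.det ∧ U * A * V = B

namespace UnimodularEquiv

theorem trans {A B C : Matrix n n R} (hAB : UnimodularEquiv A B) (hBC : UnimodularEquiv B C) :
    UnimodularEquiv A C := by
  obtain ⟨U, V, hU, hV, rfl⟩ := hAB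
  obtain ⟨U', V', hU', hV', rfl⟩ := hBC
  refine ⟨U' * U, V * V', ?_, ?_, by simp only [Matrix.mul_assoc]⟩
  · rw [det_mul]
    exact hU'.mul hU
  · rw [det_mul]
    exact hV.mul hV'

theorem diagonal_of_associated {a b : n → R} (h : ∀ i, Associated (a i) (b i)) :
    UnimodularEquiv (diagonal a) (diagonal b) := by
  choose u hu using h
  refine ⟨1, diagonal fun i => (u i : R), by simp, ?_, ?_⟩
  · rw [det_diagonal, IsUnit.prod_univ_iff]
    exact fun i => (u i).isUnit
  · rw [Matrix.one_mul, diagonal_mul_diagonal]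
    exact congrArg diagonal (funext hu)

theorem submatrix_perm (A : Matrix n n R) (σ : Equiv.Perm n) :
    UnimodularEquiv A (A.submatrix σ σ) := by
  have hσ : IsUnit ((Equiv.Perm.sign σ : ℤ) : R) :=
    (Units.isUnit _).map (Int.castRingHom R)
  refine ⟨(1 : Matrix n n R).submatrix σ id, (1 : Matrix n n R).submatrix id σ, ?_, ?_, ?_⟩
  · simpa only [det_permute, det_one, mul_one] using hσ
  · simpa only [det_permute', det_one, mul_one] using hσ
  · ext i j
    simp [Matrix.mul_apply, Matrix.one_apply]

theorem dvd_of_mul_eq_smul_one {A W : Matrix n n R} {a : n → R} {c : R}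
    (h : UnimodularEquiv A (diagonal a)) (hW : W * A = c • 1) (i : n) : a i ∣ c := by
  obtain ⟨U, V, hU, hV, hUAV⟩ := h
  have hc : V⁻¹ * W * U⁻¹ * diagonal a = c • 1 := calc
    V⁻¹ * W * U⁻¹ * diagonal a = V⁻¹ * W * (U⁻¹ * U) * A * V := by
      simp only [← hUAV, Matrix.mul_assoc]
    _ = V⁻¹ * (W * A) * V := by
      rw [nonsing_inv_mul U hU, Matrix.mul_one, Matrix.mul_assoc V⁻¹]
    _ = c • 1 := by
      rw [hW, Matrix.mul_smul, Matrix.mul_one, Matrix.smul_mul, nonsing_inv_mul V hV]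
  have hi : (V⁻¹ * W * U⁻¹) i i * a i = c := by
    simpa only [mul_diagonal, Matrix.smul_apply, one_apply_eq, smul_eq_mul, mul_one]
      using congrFun₂ hc i i
  exact Dvd.intro_left _ hi

end UnimodularEquiv

theorem exists_unimodularEquiv_diagonal [IsDomain R] [IsPrincipalIdealRing R] {A : Matrix n n R}
    (hA : A.det ≠ 0) : ∃ a : n → R, UnimodularEquiv A (diagonal a) := by
  let e := LinearEquiv.ofInjective A.mulVecLin (mulVec_injective_of_det_ne_zero hA)
  obtain ⟨b, a, c, hc⟩ :=
    Submodule.exists_smith_normal_form_of_rank_eq (Pi.basisFun R n) e.finrank_eq.symm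
  let v := c.map e.symm
  have hv : ∀ j, A *ᵥ v j = a j • b j := fun j => by
    rw [← hc j, ← e.apply_symm_apply (c j)]
    rfl
  let s := Pi.basisFun R n
  have hAV : A * s.toMatrix v = s.toMatrix b * diagonal a := by
    ext i j
    rw [mul_diagonal, mul_comm]
    exact congrFun (hv j) i
  refine ⟨a, b.toMatrix s, s.toMatrix v,
    isUnit_det_of_right_inverse (b.toMatrix_mul_toMatrix_flip s),
    isUnit_det_of_right_inverse (s.toMatrix_mul_toMatrix_flip v), ?_⟩
  rw [Matrix.mul_assoc, hAV, ← Matrix.mul_assoc, b.toMatrix_mul_toMatrix_flip, Matrix.one_mul]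

theorem exists_unimodularEquiv_diagonal_ite [IsDomain R] [IsPrincipalIdealRing R]
    {A W : Matrix n n R} {p : R} (hp : Irreducible p) (hW : W * A = p • 1) :
    ∃ S : Finset n, UnimodularEquiv A (diagonal fun i => if i ∈ S then 1 else p) := by
  classical
  have hdet : W.det * A.det ≠ 0 := by
    rw [← det_mul, hW, det_smul, det_one, mul_one]
    exact pow_ne_zero _ hp.ne_zero
  obtain ⟨a, ha⟩ := exists_unimodularEquiv_diagonal (right_ne_zero_of_mul hdet)
  refine ⟨Finset.univ.filter fun i => IsUnit (a i),
    ha.trans (.diagonal_of_associated fun i => ?_)⟩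
  rcases hp.dvd_iff.mp (ha.dvd_of_mul_eq_smul_one hW i) with hu | hap
  · simp [hu]
  · simpa [(hap.irreducible hp).not_isUnit] using hap.symm

theorem exists_perm_mem_iff_lt_card {d : ℕ} (S : Finset (Fin d)) :
    ∃ σ : Equiv.Perm (Fin d), ∀ i, σ i ∈ S ↔ (i : ℕ) < S.card := by
  have hcard : Fintype.card {i : Fin d // (i : ℕ) < S.card} = Fintype.card {i // i ∈ S} := by
    rw [Fintype.card_subtype, Fin.card_filter_val_lt, Fintype.card_coe]
    exact min_eq_right (card_finset_fin_le S)
  let e := Fintype.equivOfCardEq hcard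
  exact ⟨e.extendSubtype, fun i =>
    ⟨fun hi => by_contra fun hlt => e.extendSubtype_not_mem i hlt hi, e.extendSubtype_mem i⟩⟩

theorem unimodularEquiv_diagonal_ite_lt_card {d : ℕ} (S : Finset (Fin d)) (x y : R) :
    UnimodularEquiv (diagonal fun i => if i ∈ S then x else y)
      (diagonal fun i : Fin d => if (i : ℕ) < S.card then x else y) := by
  obtain ⟨σ, hσ⟩ := exists_perm_mem_iff_lt_card S
  convert UnimodularEquiv.submatrix_perm (diagonal fun i => if i ∈ S then x else y) σ using 1
  rw [submatrix_diagonal_equiv]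
  simp only [Function.comp_def, hσ]

end Equivalence

section IncidenceRows

variable {m n R : Type*} [Fintype n] [DecidableEq n] [Ring R]

theorem two_smul_single_mem_span_rows [Nontrivial R] {B : Matrix m n R}
    (hB : ∀ r, ∃ a b, B r = Pi.single a 1 + Pi.single b 1)
    (hker : ∀ φ, B *ᵥ φ = 0 → φ = 0) (i : n) :
    (2 : R) • (Pi.single i 1 : n → R) ∈ Submodule.span R (Set.range B) := by
  classical
  set L := Submodule.span R (Set.range B)
  let x : n → (n → R) ⧸ L := fun j => L.mkQ (Pi.single j 1)
  have hedge : ∀ r a b, B r = Pi.single a 1 + Pi.single b 1 → x b = -x a := by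
    intro r a b hr
    rw [eq_neg_iff_add_eq_zero, add_comm, ← map_add, ← hr, Submodule.mkQ_apply,
      Submodule.Quotient.mk_eq_zero]
    exact Submodule.subset_span ⟨r, rfl⟩
  suffices hx : x i = -x i by
    rwa [eq_neg_iff_add_eq_zero, ← two_smul R, ← map_smul, Submodule.mkQ_apply,
      Submodule.Quotient.mk_eq_zero] at hx
  by_contra hx
  let φ : n → R := fun j => (if x j = x i then 1 else 0) - (if x j = -x i then 1 else 0)
  have hφ : B *ᵥ φ = 0 := by
    funext r
    obtain ⟨a, b, hr⟩ := hB r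
    have hab : φ a + φ b = 0 := by
      simp only [φ, hedge r a b hr, neg_inj, neg_eq_iff_eq_neg (a := x a) (b := x i)]
      abel
    rw [mulVec, hr, add_dotProduct, single_one_dotProduct, single_one_dotProduct]
    exact hab
  have hφi : φ i = 1 := by simp [φ, hx]
  exact one_ne_zero (hφi.symm.trans (congrFun (hker φ hφ) i))

theorem exists_mul_eq_two_smul_one_of_edge_rows [Nontrivial R] [Fintype m] {B : Matrix m n R}
    (hB : ∀ r, ∃ a b, B r = Pi.single a 1 + Pi.single b 1)
    (hker : ∀ φ, B *ᵥ φ = 0 → φ = 0) : ∃ C : Matrix n m R, C * B = (2 : R) • 1 := by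
  have hrow : ∀ i, ∃ c : m → R, c ᵥ* B = (2 : R) • Pi.single i 1 := fun i => by
    obtain ⟨c, hc⟩ := (Submodule.mem_span_range_iff_exists_fun R).mp
      (two_smul_single_mem_span_rows hB hker i)
    exact ⟨c, (vecMul_eq_sum c B).trans hc⟩
  choose C hC using hrow
  refine ⟨of C, ext fun i j => ?_⟩
  rw [Matrix.smul_apply, one_eq_pi_single]
  exact congrFun (hC i) j

end IncidenceRows

theorem exists_eq_single_add_single_of_sum_eq_two {n : Type*} [Fintype n] [DecidableEq n]
    {v : n → ℤ} (hv : 0 ≤ v) (hsum : ∑ j, v j = 2) : ∃ a b, v = Pi.single a 1 + Pi.single b 1 := by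
  lift v to n → ℕ using hv
  let f : n →₀ ℕ := Finsupp.equivFunOnFinite.symm v
  have hcard : f.toMultiset.card = 2 := by
    rw [Finsupp.card_toMultiset, Finsupp.sum_fintype _ _ fun _ => rfl]
    exact Nat.cast_injective (R := ℤ) ((Nat.cast_sum _ _).trans hsum)
  obtain ⟨a, b, hab⟩ := Multiset.card_eq_two.mp hcard
  refine ⟨a, b, funext fun j => ?_⟩
  have hj : v j = ({a, b} : Multiset n).count j := by
    rw [← hab, Finsupp.count_toMultiset]
    rfl
  simp only [hj, Multiset.insert_eq_cons, Multiset.count_cons, Multiset.count_singleton,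
    Pi.add_apply, Pi.single_apply]
  push_cast
  ring

section Slack

variable {n R : Type*} [Fintype n] [DecidableEq n] [CommRing R]

variable (R) in
/-- The identity matrix with `l`-th column replaced by `2` on the diagonal and `-1` elsewhere.
Multiplying by it on the right replaces a column of ones at `l` by the slacks that bring every
row sum to `2`. -/
def slackMatrix (l : n) : Matrix n n R :=
  (1 : Matrix n n R).updateCol l (Function.update (fun _ => -1) l 2)

theorem det_slackMatrix (l : n) : (slackMatrix R l).det = 2 := by
  rw [slackMatrix, ← cramer_apply, cramer_one]
  simp

theorem mul_slackMatrix {m : Type*} {A : Matrix m n R} {l : n} (hl : ∀ i, A i l = 1) :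
    A * slackMatrix R l = A.updateCol l fun i => 2 - ∑ j ∈ Finset.univ.erase l, A i j := by
  rw [slackMatrix, mul_updateCol, Matrix.mul_one]
  congr 1
  funext i
  have herase : ∀ j ∈ Finset.univ.erase l,
      A i j * Function.update (fun _ : n => (-1 : R)) l 2 j = -A i j := fun j hj => by
    rw [Function.update_of_ne (Finset.ne_of_mem_erase hj), mul_neg_one]
  rw [mulVec, dotProduct, ← Finset.add_sum_erase _ _ (Finset.mem_univ l),
    Finset.sum_congr rfl herase, Finset.sum_neg_distrib, Function.update_self, hl, one_mul,
    sub_eq_add_neg]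

theorem mul_mul_eq_smul_one_of_isRightRegular {m : Type*} [Fintype m] {C : Matrix n m R}
    {A : Matrix m n R} {T : Matrix n n R} {c : R} (hT : IsRightRegular T)
    (h : C * (A * T) = c • 1) : T * C * A = c • 1 := by
  refine hT ?_
  simp only [Matrix.mul_assoc, h, Matrix.mul_smul, Matrix.smul_mul, Matrix.mul_one,
    Matrix.one_mul]

end Slack

theorem mul_slackMatrix_row_eq_single_add_single {m n : Type*} [Fintype n] [DecidableEq n]
    {A : Matrix m n ℤ} {l : n} (hnonneg : ∀ i j, 0 ≤ A i j) (hl : ∀ i, A i l = 1)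
    (hsum : ∀ i, ∑ j ∈ Finset.univ.erase l, A i j ≤ 2) (i : m) :
    ∃ a b, (A * slackMatrix ℤ l) i = Pi.single a 1 + Pi.single b 1 := by
  have hrow : (A * slackMatrix ℤ l) i =
      Function.update (A i) l (2 - ∑ j ∈ Finset.univ.erase l, A i j) := by
    rw [mul_slackMatrix hl]
    ext j
    rw [updateCol_apply, Function.update_apply]
  rw [hrow]
  apply exists_eq_single_add_single_of_sum_eq_two
  · intro j
    rcases eq_or_ne j l with rfl | hj
    · simpa using hsum i
    · simpa [hj] using hnonneg i j
  · rw [Finset.sum_update_of_mem (Finset.mem_univ l), Finset.sdiff_singleton_eq_erase]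
    ring

theorem exists_mul_eq_two_smul_one_of_col_eq_one {n : Type*} [Fintype n] [DecidableEq n]
    {A : Matrix n n ℤ} {l : n} (hnonneg : ∀ i j, 0 ≤ A i j) (hl : ∀ i, A i l = 1)
    (hsum : ∀ i, ∑ j ∈ Finset.univ.erase l, A i j ≤ 2) (hA : A.det ≠ 0) :
    ∃ W : Matrix n n ℤ, W * A = (2 : ℤ) • 1 := by
  set T := slackMatrix ℤ l
  have hT : T.det ≠ 0 := by rw [det_slackMatrix]; exact two_ne_zero
  have hAT : (A * T).det ≠ 0 := by rw [det_mul]; exact mul_ne_zero hA hT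
  obtain ⟨C, hC⟩ := exists_mul_eq_two_smul_one_of_edge_rows
    (mul_slackMatrix_row_eq_single_add_single hnonneg hl hsum)
    fun _ => eq_zero_of_mulVec_eq_zero hAT
  have hreg : IsRegular T := isRegular_of_isLeftRegular_det (IsRegular.of_ne_zero hT).left
  exact ⟨T * C, mul_mul_eq_smul_one_of_isRightRegular hreg.right hC⟩

theorem stmt2 (d : ℕ) (hd : 0 < d) (A : Matrix (Fin d) (Fin d) ℤ)
    (hent : ∀ i j, A i j = 0 ∨ A i j = 1 ∨ A i j = 2)
    (hlast : ∀ i, A i ⟨d - 1, by omega⟩ = 1)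
    (hsum : ∀ i,
      ∑ j ∈ Finset.univ.filter (fun j => j ≠ (⟨d - 1, by omega⟩ : Fin d)), A i j ≤ 2)
    (hdet : A.det ≠ 0) :
    ∃ (U V : Matrix (Fin d) (Fin d) ℤ) (s : ℕ), s ≤ d ∧
      (U.det = 1 ∨ U.det = -1) ∧ (V.det = 1 ∨ V.det = -1) ∧
      U * A * V = Matrix.diagonal (fun i : Fin d => if (i : ℕ) < s then 1 else 2) := by
  have hnonneg : ∀ i j, 0 ≤ A i j := fun i j => by
    rcases hent i j with h | h | h <;> simp [h]
  simp only [Finset.filter_ne'] at hsum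
  obtain ⟨W, hW⟩ := exists_mul_eq_two_smul_one_of_col_eq_one hnonneg hlast hsum hdet
  obtain ⟨S, hS⟩ := exists_unimodularEquiv_diagonal_ite Int.prime_two.irreducible hW
  obtain ⟨U, V, hU, hV, hUAV⟩ := hS.trans (unimodularEquiv_diagonal_ite_lt_card S 1 2)
  exact ⟨U, V, S.card, card_finset_fin_le S, Int.isUnit_iff.mp hU, Int.isUnit_iff.mp hV, hUAV⟩
end

section
/- Let G be a connected finite simple graph on the vertex set [n] = {1,…,n}. Then the edge polytope P_G has the integer decomposition property (is normal) if and only if for any two odd cycles C and C′ of G having no common vertex, there exists an edge of G joining a vertex of C with a vertex of C′. -/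
/-- The edge polytope of a finite simple graph `G` on the vertex set `Fin n`:
the convex hull of the vectors `e_i + e_j` for the edges `{i,j}` of `G`. -/
def edgePolytope {n : ℕ} (G : SimpleGraph (Fin n)) : Set (Fin n → ℝ) :=
  convexHull ℝ {x | ∃ i j : Fin n, G.Adj i j ∧ x = Pi.single i 1 + Pi.single j 1}

/-- A lattice polytope `P ⊆ ℝ^m` has the integer decomposition property (is normal)
if every lattice point of `N·P` is a sum of `N` lattice points of `P`. -/
def HasIDP {m : ℕ} (P : Set (Fin m → ℝ)) : Prop :=
  ∀ N : ℕ, 1 ≤ N → ∀ x : Fin m → ℝ,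
    x ∈ (fun y => (N : ℝ) • y) '' P → IsLatticePt x →
      ∃ f : Fin N → (Fin m → ℝ),
        (∀ k, f k ∈ P ∧ IsLatticePt (f k)) ∧ x = ∑ k, f k

/-!
Lattice points of a dilate of the edge polytope are multisets `m` of vertices, and the integer
decomposition property says that each such `m` is a sum of edges.

The linear inequalities valid on the polytope say that the copies of the vertices in `m` satisfy
Hall's condition for adjacency, so they carry a permutation moving every copy to a neighbour. Its
cycles write `m` as a sum of closed walks. An even closed walk is a sum of edges, and so is the
union of two odd closed walks joined by an edge; the odd cycle condition provides such an edge
for any two odd closed walks, and there is an even number of them because `m` has even size.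

Conversely, let `p` and `q` be disjoint odd closed walks. Going twice around each shows that twice
their vertex multiset is a sum of edges, so the multiset itself lies in a dilate of the polytope.
If it is a sum of edges, one of them joins `p` to `q`, since `p` has odd length.
-/

open SimpleGraph
open scoped Finset Pointwise

theorem mem_of_mem_closure_of_even {M : Type*} [AddCommMonoid M] {S : AddSubmonoid M} {T : Set M}
    (deg : M →+ ℕ) (heven : ∀ t ∈ T, Even (deg t) → t ∈ S)
    (hodd : ∀ t ∈ T, ∀ u ∈ T, Odd (deg t) → Odd (deg u) → t + u ∈ S)
    {x : M} (hx : x ∈ AddSubmonoid.closure T) (hdeg : Even (deg x)) : x ∈ S := by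
  -- By induction, an odd element lands in `S` after adding any odd generator.
  suffices h : (Even (deg x) → x ∈ S) ∧ (Odd (deg x) → ∀ u ∈ T, Odd (deg u) → x + u ∈ S) from
    h.1 hdeg
  clear hdeg
  induction hx using AddSubmonoid.closure_induction_left with
  | zero => simp
  | add_left t ht y _ ih =>
    rw [map_add]
    rcases Nat.even_or_odd (deg t) with htdeg | htdeg
    · have htS := heven t ht htdeg
      refine ⟨fun h => S.add_mem htS (ih.1 ((Nat.even_add.1 h).1 htdeg)), fun h u hu hudeg => ?_⟩
      rw [add_assoc]
      exact S.add_mem htS (ih.2 ((Nat.odd_add'.1 h).2 htdeg) u hu hudeg)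
    · refine ⟨fun h => ?_, fun h u hu hudeg => ?_⟩
      · rw [add_comm]
        exact ih.2 ((Nat.even_add'.1 h).1 htdeg) t ht htdeg
      · rw [add_right_comm]
        exact S.add_mem (hodd t ht u hu htdeg hudeg) (ih.1 ((Nat.odd_add.1 h).1 htdeg))

variable {V : Type*} {G : SimpleGraph V}

section OddCycle

theorem isCycle_cons_of_even_length {u v : V} {p : G.Walk v u} (hp : p.IsPath) (h : G.Adj u v)
    (heven : Even p.length) : (Walk.cons h p).IsCycle := by
  refine (Walk.cons_isCycle_iff p h).2 ⟨hp, fun hmem => ?_⟩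
  rw [Sym2.eq_swap] at hmem
  rw [hp.length_eq_one_of_mem_edges hmem] at heven
  exact Nat.not_even_one heven

theorem even_length_bypass_iff [DecidableEq V] {u v : V} (p : G.Walk u v)
    (hp : ∀ (w : V) (c : G.Walk w w), c.IsCycle → c.support ⊆ p.support → Even c.length) :
    Even p.bypass.length ↔ Even p.length := by
  induction p with
  | nil => simp [Walk.bypass]
  | @cons u v w h p ih =>
    have ih := ih fun w c hc hs => hp w c hc (List.subset_cons_of_subset u hs)
    by_cases hu : u ∈ p.bypass.support
    · have hodd : ¬ Even (p.bypass.takeUntil u hu).length := fun heven => by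
        have hcycle := isCycle_cons_of_even_length (p.bypass_isPath.takeUntil hu) h heven
        have hsupp := List.Subset.trans (p.bypass.support_takeUntil_subset_support hu)
          p.support_bypass_subset_support
        have := hp u _ hcycle (List.cons_subset_cons u hsupp)
        rw [Walk.length_cons, Nat.even_add_one] at this
        exact this heven
      have hlen : (p.bypass.takeUntil u hu).length + (p.bypass.dropUntil u hu).length =
          p.bypass.length := by
        rw [← Walk.length_append, Walk.take_spec]
      have hbypass : (Walk.cons h p).bypass = p.bypass.dropUntil u hu := by
        simp [Walk.bypass, hu]
      rw [hbypass, Walk.length_cons, Nat.even_add_one, ← ih, ← hlen, Nat.even_add]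
      tauto
    · have hbypass : (Walk.cons h p).bypass = Walk.cons h p.bypass := by
        simp [Walk.bypass, hu]
      rw [hbypass, Walk.length_cons, Walk.length_cons, Nat.even_add_one, Nat.even_add_one, ih]

theorem exists_odd_isCycle {u : V} (p : G.Walk u u) (hp : Odd p.length) :
    ∃ (w : V) (c : G.Walk w w), c.IsCycle ∧ Odd c.length ∧ c.support ⊆ p.support := by
  classical
  by_contra! hcon
  have hbypass := even_length_bypass_iff p fun w c hc hs =>
    Nat.not_odd_iff_even.1 fun ho => hcon w c hc ho hs
  rw [Walk.length_eq_zero_iff.2 (Walk.isPath_iff_nil.1 p.bypass_isPath)] at hbypass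
  exact Nat.not_even_iff_odd.2 hp (hbypass.1 Even.zero)

/-- The odd cycle condition of Ohsugi and Hibi: any two vertex-disjoint odd cycles are joined by
an edge. -/
def OddCycleCondition (G : SimpleGraph V) : Prop :=
  ∀ (v w : V) (c : G.Walk v v) (c' : G.Walk w w),
    c.IsCycle → c'.IsCycle → Odd c.length → Odd c'.length →
    (∀ x ∈ c.support, x ∉ c'.support) →
    ∃ x ∈ c.support, ∃ y ∈ c'.support, G.Adj x y

theorem exists_adj_mem_support {v x : V} {p : G.Walk v v} (hp : ¬ p.Nil) (hx : x ∈ p.support) :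
    ∃ y ∈ p.support, G.Adj x y := by
  classical
  refine ⟨(p.rotate x hx).snd, ?_, Walk.adj_snd ((Walk.nil_rotate hx).not.2 hp)⟩
  exact (p.mem_support_rotate_iff x hx).1 (Walk.getVert_mem_support _ 1)

theorem OddCycleCondition.exists_adj (hG : OddCycleCondition G) {v w : V} {p : G.Walk v v}
    {q : G.Walk w w} (hp : Odd p.length) (hq : Odd q.length) :
    ∃ x ∈ p.support, ∃ y ∈ q.support, G.Adj x y := by
  by_cases hdis : ∀ x ∈ p.support, x ∉ q.support
  · obtain ⟨v', c, hc, hco, hcp⟩ := exists_odd_isCycle p hp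
    obtain ⟨w', d, hd, hdo, hdq⟩ := exists_odd_isCycle q hq
    obtain ⟨x, hx, y, hy, hxy⟩ :=
      hG v' w' c d hc hd hco hdo fun x hxc hxd => hdis x (hcp hxc) (hdq hxd)
    exact ⟨x, hcp hx, y, hdq hy, hxy⟩
  · push Not at hdis
    obtain ⟨x, hxp, hxq⟩ := hdis
    have hnil : ¬ q.Nil := fun h => hq.pos.ne' (Walk.length_eq_zero_iff.2 h)
    exact ⟨x, hxp, exists_adj_mem_support hnil hxq⟩

end OddCycle

section EdgeSums

/-- The edges of `G` as two-element multisets of vertices. Their sums stand for the vectors of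
`ℕ^V` that are sums of vectors `e_i + e_j` with `{i, j}` an edge. -/
def edgePairs (G : SimpleGraph V) : Set (Multiset V) :=
  {m | ∃ a b, G.Adj a b ∧ m = {a, b}}

/-- The vertex multisets of the closed walks of `G`; the tail of the support lists each visit
once, as the base point would otherwise be counted at both ends. -/
def closedWalkVertices (G : SimpleGraph V) : Set (Multiset V) :=
  {m | ∃ (v : V) (p : G.Walk v v), m = p.support.tail}

theorem pair_mem_closure_edgePairs {a b : V} (h : G.Adj a b) :
    {a, b} ∈ AddSubmonoid.closure (edgePairs G) :=
  AddSubmonoid.subset_closure ⟨a, b, h, rfl⟩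

theorem card_of_mem_edgePairs {m : Multiset V} (hm : m ∈ edgePairs G) : m.card = 2 := by
  obtain ⟨a, b, -, rfl⟩ := hm
  exact Multiset.card_pair a b

theorem support_tail_mem_closure_edgePairs {u v : V} (p : G.Walk u v) (hp : Even p.length) :
    (p.support.tail : Multiset V) ∈ AddSubmonoid.closure (edgePairs G) :=
  match p, hp with
  | .nil, _ => AddSubmonoid.zero_mem _
  | .cons _ .nil, hp => absurd hp Nat.not_even_one
  | .cons _ (.cons (u := b) (v := c) h p), hp => by
    have htail := support_tail_mem_closure_edgePairs p (by simpa [parity_simps] using hp)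
    have hsupp : ((b :: p.support : List V) : Multiset V) =
        {b, c} + (p.support.tail : Multiset V) := by
      rw [← p.cons_tail_support]
      rfl
    simpa only [Walk.support_cons, List.tail_cons, hsupp] using
      AddSubmonoid.add_mem _ (pair_mem_closure_edgePairs h) htail

theorem exists_support_tail_eq_cons {v x : V} {p : G.Walk v v} (hp : Odd p.length)
    (hx : x ∈ p.support) :
    ∃ m ∈ AddSubmonoid.closure (edgePairs G), (p.support.tail : Multiset V) = x ::ₘ m := by
  classical
  have hrot : (p.support.tail : Multiset V) = (p.rotate x hx).support.tail :=
    Multiset.coe_eq_coe.2 (p.support_rotate x hx).perm.symm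
  rw [hrot]
  rw [← p.length_rotate x hx] at hp
  cases hq : p.rotate x hx with
  | nil => simp [hq] at hp
  | cons h q =>
    rw [hq, Walk.length_cons, Nat.odd_add_one, Nat.not_odd_iff_even, ← q.length_reverse] at hp
    refine ⟨_, support_tail_mem_closure_edgePairs q.reverse hp, ?_⟩
    rw [Walk.support_cons, List.tail_cons, ← Multiset.coe_reverse, ← q.support_reverse,
      Multiset.cons_coe, Walk.cons_tail_support]

theorem OddCycleCondition.add_mem_closure_edgePairs (hG : OddCycleCondition G) {v w : V}
    {p : G.Walk v v} {q : G.Walk w w} (hp : Odd p.length) (hq : Odd q.length) :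
    (p.support.tail + q.support.tail : Multiset V) ∈ AddSubmonoid.closure (edgePairs G) := by
  obtain ⟨x, hx, y, hy, hxy⟩ := hG.exists_adj hp hq
  obtain ⟨m, hm, hpm⟩ := exists_support_tail_eq_cons hp hx
  obtain ⟨m', hm', hqm⟩ := exists_support_tail_eq_cons hq hy
  have hsplit : x ::ₘ m + y ::ₘ m' = {x, y} + (m + m') := by
    simp only [← Multiset.singleton_add, Multiset.insert_eq_cons]
    abel
  rw [hpm, hqm, hsplit]
  exact AddSubmonoid.add_mem _ (pair_mem_closure_edgePairs hxy) (AddSubmonoid.add_mem _ hm hm')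

theorem OddCycleCondition.mem_closure_edgePairs (hG : OddCycleCondition G) {m : Multiset V}
    (hm : m ∈ AddSubmonoid.closure (closedWalkVertices G)) (hcard : Even m.card) :
    m ∈ AddSubmonoid.closure (edgePairs G) := by
  refine mem_of_mem_closure_of_even Multiset.cardHom ?_ ?_ hm hcard
  · rintro _ ⟨v, p, rfl⟩ hp
    exact support_tail_mem_closure_edgePairs p (by simpa using hp)
  · rintro _ ⟨v, p, rfl⟩ _ ⟨w, q, rfl⟩ hp hq
    exact hG.add_mem_closure_edgePairs (by simpa using hp) (by simpa using hq)

theorem two_nsmul_support_tail_mem_closure_edgePairs {v : V} (p : G.Walk v v) :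
    2 • (p.support.tail : Multiset V) ∈ AddSubmonoid.closure (edgePairs G) := by
  have h := support_tail_mem_closure_edgePairs (p.append p) (by simp [Walk.length_append])
  rwa [Walk.tail_support_append, ← Multiset.coe_add, ← two_nsmul] at h

theorem even_countP_of_mem_closure_edgePairs {P : V → Prop} [DecidablePred P] {m : Multiset V}
    (hm : m ∈ AddSubmonoid.closure (edgePairs G))
    (hP : ∀ x ∈ m, ∀ y ∈ m, G.Adj x y → (P x ↔ P y)) : Even (m.countP P) := by
  induction hm using AddSubmonoid.closure_induction with
  | mem m hm =>
    obtain ⟨a, b, hab, rfl⟩ := hm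
    have hiff := hP a (by simp) b (by simp) hab
    by_cases ha : P a <;> simp [Multiset.insert_eq_cons, ha, ← hiff, ← Multiset.cons_zero]
  | zero => simp
  | add m m' _ _ ih ih' =>
    rw [Multiset.countP_add]
    simp only [Multiset.mem_add] at hP
    exact (ih fun x hx y hy => hP x (.inl hx) y (.inl hy)).add
      (ih' fun x hx y hy => hP x (.inr hx) y (.inr hy))

theorem exists_adj_of_add_mem_closure_edgePairs {v w : V} {p : G.Walk v v} {q : G.Walk w w}
    (h : (p.support.tail + q.support.tail : Multiset V) ∈ AddSubmonoid.closure (edgePairs G))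
    (hp : Odd p.length) (hdis : ∀ x ∈ p.support, x ∉ q.support) :
    ∃ x ∈ p.support, ∃ y ∈ q.support, G.Adj x y := by
  classical
  by_contra! hno
  have hmem (x : V) (hx : x ∈ (p.support.tail + q.support.tail : Multiset V)) :
      x ∈ p.support ∨ x ∈ q.support :=
    (Multiset.mem_add.1 hx).imp List.mem_of_mem_tail List.mem_of_mem_tail
  have heven := even_countP_of_mem_closure_edgePairs (P := (· ∈ p.support)) h
    fun x hx y hy hxy =>
      ⟨fun hxp => (hmem y hy).resolve_right fun hyq => hno x hxp y hyq hxy,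
        fun hyp => (hmem x hx).resolve_right fun hxq => hno y hyp x hxq hxy.symm⟩
  have hcountp : (p.support.tail : Multiset V).countP (· ∈ p.support) = p.length := by
    rw [Multiset.countP_eq_card.2 fun x hx => List.mem_of_mem_tail hx]
    simp
  have hcountq : (q.support.tail : Multiset V).countP (· ∈ p.support) = 0 :=
    Multiset.countP_eq_zero.2 fun x hx hxp => hdis x hxp (List.mem_of_mem_tail hx)
  rw [Multiset.countP_add, hcountp, hcountq, add_zero] at heven
  exact Nat.not_even_iff_odd.2 hp heven

theorem exists_sum_of_mem_closure_edgePairs {m : Multiset V} {N : ℕ}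
    (hm : m ∈ AddSubmonoid.closure (edgePairs G)) (hcard : m.card = 2 * N) :
    ∃ f : Fin N → Multiset V, (∀ k, f k ∈ edgePairs G) ∧ m = ∑ k, f k := by
  obtain ⟨l, hl, rfl⟩ := AddSubmonoid.exists_list_of_mem_closure hm
  have hlength : l.sum.card = 2 * l.length := by
    rw [← Multiset.cardHom_apply, map_list_sum, List.sum_eq_card_nsmul _ 2]
    · rw [List.length_map, smul_eq_mul, mul_comm]
    · simpa using fun m hm => card_of_mem_edgePairs (hl m hm)
  obtain rfl : l.length = N := by omega
  exact ⟨fun k => l[k], fun k => hl _ (List.getElem_mem _), (Fin.sum_univ_getElem l).symm⟩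

end EdgeSums

section Permutation

variable {α : Type*}

theorem exists_walk_support_eq_map_iterate {f : α → V} {σ : α → α} {a : α}
    (hadj : ∀ j, G.Adj (f (σ^[j] a)) (f (σ^[j + 1] a))) (k : ℕ) :
    ∃ p : G.Walk (f a) (f (σ^[k] a)), p.support = (List.iterate σ a (k + 1)).map f := by
  induction k generalizing a with
  | zero => exact ⟨.nil, rfl⟩
  | succ k ih =>
    obtain ⟨p, hp⟩ := ih fun j => hadj (j + 1)
    exact ⟨.cons (hadj 0) p, congrArg (f a :: ·) hp⟩

variable [Fintype α] [DecidableEq α]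

theorem support_val_eq_toList {σ : Equiv.Perm α} (hσ : σ.IsCycle) {a : α} (ha : a ∈ σ.support) :
    σ.support.val = σ.toList a := by
  refine (Multiset.Nodup.ext σ.support.nodup (Multiset.coe_nodup.2 (σ.nodup_toList a))).2
    fun b => ?_
  rw [Multiset.mem_coe, Equiv.Perm.mem_toList_iff, Finset.mem_val]
  exact ⟨fun hb => ⟨hσ.sameCycle (Equiv.Perm.mem_support.1 ha) (Equiv.Perm.mem_support.1 hb), ha⟩,
    fun h => (h.1.mem_support_iff).1 ha⟩

theorem map_support_mem_closedWalkVertices {f : α → V} {σ : Equiv.Perm α} (hσ : σ.IsCycle)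
    (hadj : ∀ a ∈ σ.support, G.Adj (f a) (f (σ a))) :
    σ.support.val.map f ∈ closedWalkVertices G := by
  obtain ⟨a, ha⟩ := hσ.nonempty_support
  have hclosed : σ^[#σ.support] a = a := by
    rw [← Equiv.Perm.coe_pow, ← hσ.orderOf, pow_orderOf_eq_one, Equiv.Perm.one_apply]
  have hadj_orbit (j : ℕ) : G.Adj (f (σ^[j] a)) (f (σ^[j + 1] a)) := by
    rw [Function.iterate_succ_apply', ← Equiv.Perm.coe_pow]
    exact hadj _ (Equiv.Perm.pow_apply_mem_support.2 ha)
  have hwalk := exists_walk_support_eq_map_iterate hadj_orbit #σ.support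
  rw [hclosed] at hwalk
  obtain ⟨p, hp⟩ := hwalk
  refine ⟨f a, p, ?_⟩
  rw [hp, support_val_eq_toList hσ (Equiv.Perm.apply_mem_support.2 ha), Equiv.Perm.toList,
    hσ.cycleOf_eq (Equiv.Perm.mem_support.1 (Equiv.Perm.apply_mem_support.2 ha))]
  rfl

theorem map_support_mem_closure_closedWalkVertices {f : α → V} (σ : Equiv.Perm α)
    (hadj : ∀ a ∈ σ.support, G.Adj (f a) (f (σ a))) :
    σ.support.val.map f ∈ AddSubmonoid.closure (closedWalkVertices G) := by
  induction σ using Equiv.Perm.cycle_induction_on with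
  | base_one => simp
  | base_cycles σ hσ =>
    exact AddSubmonoid.subset_closure (map_support_mem_closedWalkVertices hσ hadj)
  | induction_disjoint σ τ hdis _ ihσ ihτ =>
    have hval : (σ * τ).support.val = σ.support.val + τ.support.val := by
      rw [hdis.support_mul, ← Finset.disjUnion_eq_union _ _ hdis.disjoint_support]
      rfl
    rw [hval, Multiset.map_add]
    refine AddSubmonoid.add_mem _ (ihσ fun a ha => ?_) (ihτ fun a ha => ?_)
    · have hmul : (σ * τ) a = σ a := by
        rw [Equiv.Perm.mul_apply, (hdis a).resolve_left (Equiv.Perm.mem_support.1 ha)]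
      rw [← hmul]
      exact hadj a (hdis.support_mul ▸ Finset.mem_union_left _ ha)
    · have hmul : (σ * τ) a = τ a := by
        rw [hdis.commute.eq, Equiv.Perm.mul_apply,
          (hdis a).resolve_right (Equiv.Perm.mem_support.1 ha)]
      rw [← hmul]
      exact hadj a (hdis.support_mul ▸ Finset.mem_union_right _ ha)

end Permutation

section Hall

variable [DecidableEq V] [G.LocallyFinite]

/-- Hall's condition for the bipartite graph on two copies of the multiset `m` in which two
elements are joined when the underlying vertices are adjacent in `G`. -/
def HallCondition (G : SimpleGraph V) [G.LocallyFinite] (m : Multiset V) : Prop :=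
  ∀ A : Finset V, ∑ v ∈ A, m.count v ≤ ∑ v ∈ A.biUnion (fun a => G.neighborFinset a), m.count v

theorem card_filter_coe_mem (m : Multiset V) (A : Finset V) :
    #{x : m | (x : V) ∈ A} = ∑ v ∈ A, m.count v := by
  have hcount : m.countP (· ∈ A) = #{x : m | (x : V) ∈ A} := by
    conv_lhs => rw [← m.map_univ_coe, Multiset.countP_map]
    rfl
  rw [← hcount, Multiset.countP_eq_card_filter]
  rw [← Multiset.sum_count_eq_card (s := A) fun a ha => (Multiset.mem_filter.1 ha).2]
  exact Finset.sum_congr rfl fun v hv => Multiset.count_filter_of_pos hv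

theorem HallCondition.exists_perm {m : Multiset V} (hm : HallCondition G m) :
    ∃ σ : Equiv.Perm m, ∀ x : m, G.Adj x (σ x) := by
  classical
  let neighbors (x : m) : Finset m := {y | (y : V) ∈ G.neighborFinset x}
  have hhall (s : Finset m) : #s ≤ #(s.biUnion neighbors) := by
    let A : Finset V := s.image fun x : m => (x : V)
    calc #s ≤ #{x : m | (x : V) ∈ A} :=
          Finset.card_le_card fun x hx =>
            Finset.mem_filter.2 ⟨Finset.mem_univ x, Finset.mem_image_of_mem _ hx⟩
      _ ≤ #{y : m | (y : V) ∈ A.biUnion (fun a => G.neighborFinset a)} := by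
          simpa only [card_filter_coe_mem] using hm A
      _ = #(s.biUnion neighbors) := by
          congr 1
          ext y
          simp [A, neighbors]
  obtain ⟨σ, hinj, hσ⟩ := (Finset.all_card_le_biUnion_card_iff_exists_injective neighbors).1 hhall
  exact ⟨Equiv.ofBijective σ (Finite.injective_iff_bijective.1 hinj), fun x => by
    simpa [neighbors] using hσ x⟩

theorem HallCondition.mem_closure_closedWalkVertices {m : Multiset V} (hm : HallCondition G m) :
    m ∈ AddSubmonoid.closure (closedWalkVertices G) := by
  classical
  obtain ⟨σ, hσ⟩ := hm.exists_perm
  have hsupport : σ.support = Finset.univ := by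
    refine Finset.eq_univ_iff_forall.2 fun x => Equiv.Perm.mem_support.2 fun hx => ?_
    exact G.irrefl (hx ▸ hσ x)
  have h := map_support_mem_closure_closedWalkVertices (f := fun x : m => (x : V)) σ fun x _ => hσ x
  rwa [hsupport, Multiset.map_univ_coe] at h

theorem HallCondition.mem_edgePairs {m : Multiset V} (hm : HallCondition G m) (hcard : m.card = 2) :
    m ∈ edgePairs G := by
  obtain ⟨a, b, rfl⟩ := Multiset.card_eq_two.1 hcard
  refine ⟨a, b, by_contra fun hab => ?_, rfl⟩
  have hle := hm {a}
  have hzero : ∑ v ∈ G.neighborFinset a, Multiset.count v {a, b} = 0 :=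
    Finset.sum_eq_zero fun v hv => by
      have hv := (G.mem_neighborFinset a v).1 hv
      rw [Multiset.count_eq_zero, Multiset.insert_eq_cons, Multiset.mem_cons,
        Multiset.mem_singleton, not_or]
      exact ⟨hv.ne', fun h => hab (h ▸ hv)⟩
  rw [Finset.sum_singleton, Finset.singleton_biUnion, hzero, Nat.le_zero,
    Multiset.count_eq_zero] at hle
  exact hle (by simp)

end Hall

section Polytope

/-- The vector of multiplicities of a multiset; it sends `{a, b}` to `e_a + e_b`. -/
def multiplicityVector [DecidableEq V] : Multiset V →+ (V → ℝ) where
  toFun m v := m.count v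
  map_zero' := by ext; simp
  map_add' _ _ := by ext; simp

theorem multiplicityVector_injective [DecidableEq V] :
    Function.Injective (multiplicityVector : Multiset V → V → ℝ) := fun _ _ h =>
  Multiset.ext' fun v => Nat.cast_injective (congrFun h v)

theorem multiplicityVector_pair [DecidableEq V] (a b : V) :
    multiplicityVector {a, b} = Pi.single a 1 + Pi.single b 1 := by
  ext v
  simp [multiplicityVector, Multiset.insert_eq_cons, Multiset.count_cons, Multiset.count_singleton,
    Pi.single_apply, add_comm]

theorem isLatticePt_multiplicityVector {n : ℕ} (m : Multiset (Fin n)) :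
    IsLatticePt (multiplicityVector m) := fun v =>
  ⟨m.count v, (Int.cast_natCast _).symm⟩

theorem exists_multiplicityVector_eq {n : ℕ} {x : Fin n → ℝ} (hx : IsLatticePt x) (h0 : 0 ≤ x) :
    ∃ m, multiplicityVector m = x := by
  choose z hz using hx
  refine ⟨Finsupp.toMultiset (Finsupp.equivFunOnFinite.symm fun v => (z v).toNat),
    funext fun v => ?_⟩
  have hzv : 0 ≤ z v := by
    rw [← Int.cast_nonneg_iff (R := ℝ), ← hz v]
    exact h0 v
  have hcast : ((z v).toNat : ℝ) = z v := by exact_mod_cast Int.toNat_of_nonneg hzv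
  simpa [multiplicityVector, Finsupp.count_toMultiset, hz v] using hcast

variable {n : ℕ} {G : SimpleGraph (Fin n)}

theorem multiplicityVector_mem_edgePolytope {m : Multiset (Fin n)} (hm : m ∈ edgePairs G) :
    multiplicityVector m ∈ edgePolytope G := by
  obtain ⟨a, b, hab, rfl⟩ := hm
  exact subset_convexHull ℝ _ ⟨a, b, hab, multiplicityVector_pair a b⟩

theorem le_dotProduct_of_mem_edgePolytope {w y : Fin n → ℝ} {r : ℝ}
    (hw : ∀ i j, G.Adj i j → r ≤ w i + w j) (hy : y ∈ edgePolytope G) : r ≤ w ⬝ᵥ y := by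
  have hlin : IsLinearMap ℝ (w ⬝ᵥ ·) := ⟨dotProduct_add w, fun c => dotProduct_smul c w⟩
  refine convexHull_min ?_ (convex_halfSpace_ge hlin r) hy
  rintro _ ⟨i, j, hij, rfl⟩
  simpa using hw i j hij

theorem nonneg_of_mem_edgePolytope {y : Fin n → ℝ} (hy : y ∈ edgePolytope G) : 0 ≤ y := fun i => by
  have h0 : (0 : Fin n → ℝ) ≤ Pi.single i 1 := Pi.single_nonneg.2 zero_le_one
  have h := le_dotProduct_of_mem_edgePolytope (fun a b _ => add_nonneg (h0 a) (h0 b)) hy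
  rwa [single_one_dotProduct] at h

theorem sum_eq_two_of_mem_edgePolytope {y : Fin n → ℝ} (hy : y ∈ edgePolytope G) :
    ∑ v, y v = 2 := by
  have hge := le_dotProduct_of_mem_edgePolytope (w := 1) (r := 2) (fun _ _ _ => by norm_num) hy
  have hle := le_dotProduct_of_mem_edgePolytope (w := -1) (r := -2) (fun _ _ _ => by norm_num) hy
  rw [neg_dotProduct, neg_le_neg_iff] at hle
  rw [← one_dotProduct]
  exact le_antisymm hle hge

theorem sum_le_sum_neighbors_of_mem_edgePolytope [DecidableRel G.Adj] {y : Fin n → ℝ}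
    (hy : y ∈ edgePolytope G) (A : Finset (Fin n)) :
    ∑ v ∈ A, y v ≤ ∑ v ∈ A.biUnion (fun a => G.neighborFinset a), y v := by
  let nbrs : Finset (Fin n) := A.biUnion fun a => G.neighborFinset a
  let χ (s : Finset (Fin n)) (v : Fin n) : ℝ := if v ∈ s then 1 else 0
  have hχ (s : Finset (Fin n)) : χ s ⬝ᵥ y = ∑ v ∈ s, y v := by simp [χ, dotProduct]
  have hweight (i j : Fin n) (hij : G.Adj i j) : χ A i ≤ χ nbrs j := by
    by_cases hi : i ∈ A
    · have hj : j ∈ nbrs :=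
        Finset.mem_biUnion.2 ⟨i, hi, (G.mem_neighborFinset i j).2 hij⟩
      simp only [χ, hi, hj, if_true, le_refl]
    · simp only [χ, hi, if_false]
      split_ifs <;> norm_num
  have h := le_dotProduct_of_mem_edgePolytope (w := χ nbrs - χ A) (r := 0)
    (fun i j hij => by
      have := hweight i j hij
      have := hweight j i hij.symm
      simp only [Pi.sub_apply]
      linarith) hy
  rwa [sub_dotProduct, hχ, hχ, sub_nonneg] at h

theorem card_of_mem_smul_edgePolytope {m : Multiset (Fin n)} {N : ℕ}
    (hm : multiplicityVector m ∈ (N : ℝ) • edgePolytope G) : m.card = 2 * N := by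
  obtain ⟨y, hy, hym⟩ := hm
  have hsum : ∑ v, (m.count v : ℝ) = N * ∑ v, y v := by
    rw [Finset.mul_sum]
    exact Finset.sum_congr rfl fun v _ => (congrFun hym v).symm
  rw [sum_eq_two_of_mem_edgePolytope hy, mul_comm] at hsum
  rw [← Multiset.sum_count_eq_card fun v _ => Finset.mem_univ v]
  exact_mod_cast hsum

theorem hallCondition_of_mem_smul_edgePolytope [DecidableRel G.Adj] {m : Multiset (Fin n)} {N : ℕ}
    (hm : multiplicityVector m ∈ (N : ℝ) • edgePolytope G) : HallCondition G m := by
  obtain ⟨y, hy, hym⟩ := hm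
  have hsum (s : Finset (Fin n)) : ((∑ v ∈ s, m.count v : ℕ) : ℝ) = N * ∑ v ∈ s, y v := by
    rw [Finset.mul_sum, Nat.cast_sum]
    exact Finset.sum_congr rfl fun v _ => (congrFun hym v).symm
  intro A
  have h := mul_le_mul_of_nonneg_left (sum_le_sum_neighbors_of_mem_edgePolytope hy A)
    (Nat.cast_nonneg (α := ℝ) N)
  rw [← hsum, ← hsum] at h
  exact_mod_cast h

theorem exists_mem_edgePairs_of_isLatticePt {y : Fin n → ℝ} (hy : y ∈ edgePolytope G)
    (hlat : IsLatticePt y) : ∃ m ∈ edgePairs G, multiplicityVector m = y := by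
  classical
  obtain ⟨m, rfl⟩ := exists_multiplicityVector_eq hlat (nonneg_of_mem_edgePolytope hy)
  have hm : multiplicityVector m ∈ ((1 : ℕ) : ℝ) • edgePolytope G := by simpa using hy
  exact ⟨m, (hallCondition_of_mem_smul_edgePolytope hm).mem_edgePairs
    (card_of_mem_smul_edgePolytope hm), rfl⟩

theorem mem_smul_edgePolytope_of_nsmul_mem_closure {m : Multiset (Fin n)} {N r : ℕ} (hr : r ≠ 0)
    (hN : N ≠ 0) (hcard : m.card = 2 * N)
    (hm : r • m ∈ AddSubmonoid.closure (edgePairs G)) :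
    multiplicityVector m ∈ (N : ℝ) • edgePolytope G := by
  obtain ⟨f, hf, hsum⟩ := exists_sum_of_mem_closure_edgePairs (N := r * N) hm
    (by rw [Multiset.card_nsmul, hcard]; ring)
  have hweights : ∑ _k : Fin (r * N), 1 / (r * N : ℝ) = 1 := by
    rw [Finset.sum_const, Finset.card_univ, Fintype.card_fin, nsmul_eq_mul, Nat.cast_mul]
    field_simp
  have havg : ∑ k, (1 / (r * N : ℝ)) • multiplicityVector (f k) ∈ edgePolytope G :=
    (convex_convexHull ℝ _).sum_mem (fun _ _ => by positivity) hweights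
      fun k _ => multiplicityVector_mem_edgePolytope (hf k)
  refine ⟨_, havg, ?_⟩
  dsimp only
  rw [← Finset.smul_sum, ← map_sum, ← hsum, map_nsmul, ← Nat.cast_smul_eq_nsmul ℝ, smul_smul,
    smul_smul]
  convert one_smul ℝ _
  field_simp

theorem support_tail_add_mem_smul_edgePolytope {v w : Fin n} {p : G.Walk v v} {q : G.Walk w w}
    {N : ℕ} (hN : N ≠ 0) (hlength : p.length + q.length = 2 * N) :
    multiplicityVector (p.support.tail + q.support.tail : Multiset (Fin n)) ∈
      (N : ℝ) • edgePolytope G := by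
  refine mem_smul_edgePolytope_of_nsmul_mem_closure two_ne_zero hN (by simpa using hlength) ?_
  rw [nsmul_add]
  exact AddSubmonoid.add_mem _ (two_nsmul_support_tail_mem_closure_edgePairs p)
    (two_nsmul_support_tail_mem_closure_edgePairs q)

theorem hasIDP_edgePolytope_iff :
    HasIDP (edgePolytope G) ↔ ∀ N : ℕ, 1 ≤ N → ∀ m,
      multiplicityVector m ∈ (N : ℝ) • edgePolytope G → m ∈ AddSubmonoid.closure (edgePairs G) := by
  constructor
  · intro hidp N hN m hm
    obtain ⟨f, hf, hsum⟩ := hidp N hN _ hm (isLatticePt_multiplicityVector m)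
    choose g hg hgf using fun k => exists_mem_edgePairs_of_isLatticePt (hf k).1 (hf k).2
    have hmg : m = ∑ k, g k := multiplicityVector_injective <| by
      rw [hsum, map_sum]
      exact Finset.sum_congr rfl fun k _ => (hgf k).symm
    rw [hmg]
    exact AddSubmonoid.sum_mem _ fun k _ => AddSubmonoid.subset_closure (hg k)
  · intro h N hN x hx hlat
    have hx0 : 0 ≤ x := by
      obtain ⟨y, hy, rfl⟩ := hx
      exact smul_nonneg N.cast_nonneg (nonneg_of_mem_edgePolytope hy)
    obtain ⟨m, rfl⟩ := exists_multiplicityVector_eq hlat hx0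
    obtain ⟨f, hf, rfl⟩ :=
      exists_sum_of_mem_closure_edgePairs (h N hN m hx) (card_of_mem_smul_edgePolytope hx)
    exact ⟨fun k => multiplicityVector (f k), fun k =>
      ⟨multiplicityVector_mem_edgePolytope (hf k), isLatticePt_multiplicityVector _⟩,
      map_sum multiplicityVector f _⟩

theorem OddCycleCondition.hasIDP_edgePolytope (hG : OddCycleCondition G) :
    HasIDP (edgePolytope G) := by
  classical
  refine hasIDP_edgePolytope_iff.2 fun N _ m hm => ?_
  have hcard : Even m.card := card_of_mem_smul_edgePolytope hm ▸ even_two_mul N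
  exact hG.mem_closure_edgePairs
    (hallCondition_of_mem_smul_edgePolytope hm).mem_closure_closedWalkVertices hcard

theorem exists_adj_of_hasIDP (hidp : HasIDP (edgePolytope G)) {v w : Fin n} {p : G.Walk v v}
    {q : G.Walk w w} (hp : Odd p.length) (hq : Odd q.length)
    (hdis : ∀ x ∈ p.support, x ∉ q.support) : ∃ x ∈ p.support, ∃ y ∈ q.support, G.Adj x y := by
  obtain ⟨N, hN⟩ := (hp.add_odd hq).two_dvd
  have hNpos : 0 < N := by
    have := hp.pos
    omega
  exact exists_adj_of_add_mem_closure_edgePairs (hasIDP_edgePolytope_iff.1 hidp N hNpos _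
    (support_tail_add_mem_smul_edgePolytope hNpos.ne' hN)) hp hdis

end Polytope

theorem stmt10_general (n : ℕ) (G : SimpleGraph (Fin n)) :
    HasIDP (edgePolytope G) ↔ OddCycleCondition G :=
  ⟨fun hidp _ _ _ _ _ _ hc hc' hdis => exists_adj_of_hasIDP hidp hc hc' hdis,
    OddCycleCondition.hasIDP_edgePolytope⟩

theorem stmt10 (n : ℕ) (G : SimpleGraph (Fin n))
    (hiso : ∀ v : Fin n, ∃ w, G.Adj v w) (hconn : G.Connected) :
    HasIDP (edgePolytope G) ↔
      ∀ (v w : Fin n) (c : G.Walk v v) (c' : G.Walk w w),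
        c.IsCycle → c'.IsCycle → Odd c.length → Odd c'.length →
        (∀ x ∈ c.support, x ∉ c'.support) →
        ∃ x ∈ c.support, ∃ y ∈ c'.support, G.Adj x y :=
  stmt10_general n G
end
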